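/- Let t be a divisor of q−1 and let w be a divisor of q+1. Let L̄ ≤ M_ℓ be a subgroup such that |L̄ ∩ Z| = w and L̄ is the internal direct product of L̄ ∩ Z and a subgroup D isomorphic to the dihedral group of order 2t. Then the number N of orbits of L̄ acting on O equals (q−1+3t)/(2t) + (q/2)·((q−1)/t)·((q+1)/w). -/

import Mathlib

/-!
The line at infinity `Z = 0` is invariant, so the two summands of the formula count the orbits on
the two parts of the curve.

Off the line, `L = D × (L ∩ Z)` acts freely. Indeed `|D| = 2t` is coprime to `q + 1`, so if `d z`
fixes an affine point then so does `(d z) ^ |D| = z ^ |D|`; since `Z` acts freely off the line and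
`z ^ (q + 1) = 1`, this gives `z = 1`. Moreover `det d` has order dividing both `2t` and `q + 1`, so
`d` has determinant `1` and is determined by its value on an affine point. The orbit count is the
number `(q + 1) q (q - 1)` of affine points divided by `|L| = 2tw`.

On the line, `Z` acts trivially, and a nontrivial element of determinant `1` fixes at most two of
the `q + 1` points, because the slopes of fixed points are the roots of a nonzero quadratic. As
`q + 1` is odd, each of the `t` reflections fixes exactly one point, and then Burnside's formula
modulo `2t` forces the nontrivial rotations to fix `2t - 2` points in total. This determines the
number of orbits without any knowledge of the individual rotations.
-/

open Matrix

noncomputable def glAct {F : Type*} [Field F] (M : GL (Fin 3) F)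
    (x : Projectivization F (Fin 3 → F)) : Projectivization F (Fin 3 → F) :=
  Projectivization.map
    ((LinearMap.GeneralLinearGroup.generalLinearEquiv F (Fin 3 → F)
        (Matrix.GeneralLinearGroup.toLin M)).toLinearMap)
    ((LinearMap.GeneralLinearGroup.generalLinearEquiv F (Fin 3 → F)
        (Matrix.GeneralLinearGroup.toLin M)).injective) x

noncomputable def numOrbits {F : Type*} [Field F] (L : Subgroup (GL (Fin 3) F))
    (O : Set (Projectivization F (Fin 3 → F))) : ℕ :=
  Nat.card ((fun x => {y | ∃ g ∈ L, glAct g x = y}) '' O :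
    Set (Set (Projectivization F (Fin 3 → F))))

def hermitianPts (q : ℕ) (F : Type*) [Field F] : Set (Projectivization F (Fin 3 → F)) :=
  {x | x.rep 1 ^ (q + 1) = x.rep 0 ^ (q + 1) - x.rep 2 ^ (q + 1)}

def MlSet (q : ℕ) (F : Type*) [Field F] : Set (GL (Fin 3) F) :=
  {M | ∃ a c τ : F, a ^ (q + 1) - c ^ (q + 1) = 1 ∧ τ ^ (q + 1) = 1 ∧
    (M : Matrix (Fin 3) (Fin 3) F) = !![a, τ * c ^ q, 0; c, τ * a ^ q, 0; 0, 0, 1]}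

def ZSet (q : ℕ) (F : Type*) [Field F] : Set (GL (Fin 3) F) :=
  {M | ∃ ε : F, ε ^ (q + 1) = 1 ∧ (M : Matrix (Fin 3) (Fin 3) F) = Matrix.diagonal ![ε, ε, 1]}

section Cyclic

variable {G : Type*} [CommGroup G] [IsCyclic G] [Finite G] {m n : ℕ} {u : G}

theorem range_powMonoidHom_eq_ker_powMonoidHom (hG : Nat.card G = m * n) :
    (powMonoidHom m : G →* G).range = (powMonoidHom n).ker := by
  have hm : 0 < m := Nat.pos_of_mul_pos_right (hG ▸ Nat.card_pos)
  refine Subgroup.eq_of_le_of_card_ge ?_ ?_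
  · rintro _ ⟨x, rfl⟩
    rw [MonoidHom.mem_ker, powMonoidHom_apply, powMonoidHom_apply, ← pow_mul, ← hG,
      pow_card_eq_one']
  · rw [IsCyclic.card_powMonoidHom_range, IsCyclic.card_powMonoidHom_ker, hG,
      Nat.gcd_mul_left_left, Nat.gcd_mul_right_left, Nat.mul_div_cancel_left _ hm]

theorem ncard_setOf_pow_eq (hG : Nat.card G = m * n) (hu : u ^ n = 1) :
    {x : G | x ^ m = u}.ncard = m := by
  obtain ⟨v, rfl⟩ : u ∈ (powMonoidHom m : G →* G).range := by
    rwa [range_powMonoidHom_eq_ker_powMonoidHom hG]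
  calc {x : G | x ^ m = v ^ m}.ncard
      = Nat.card (powMonoidHom m : G →* G).ker :=
        Nat.card_congr (MonoidHom.fiberEquivKer (powMonoidHom m : G →* G) v)
    _ = m := by rw [IsCyclic.card_powMonoidHom_ker, hG, Nat.gcd_mul_right_left]

end Cyclic

section Norm

variable {F : Type*} [Field F] [Fintype F] {q : ℕ}

theorem one_lt_of_card_eq_sq (hF : Fintype.card F = q ^ 2) : 1 < q := by
  by_contra! hq
  have := Fintype.one_lt_card (α := F)
  interval_cases q <;> omega

theorem add_pow_of_card_eq_sq (hF : Fintype.card F = q ^ 2) (x y : F) :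
    (x + y) ^ q = x ^ q + y ^ q := by
  obtain ⟨p, _⟩ := CharP.exists F
  obtain ⟨n, hp, hn⟩ := FiniteField.card F p
  obtain ⟨k, -, rfl⟩ := (Nat.dvd_prime_pow hp).1 (hn ▸ hF ▸ dvd_pow_self q two_ne_zero)
  have := Fact.mk hp
  exact add_pow_char_pow x y p k

theorem pow_pow_of_card_eq_sq (hF : Fintype.card F = q ^ 2) (x : F) : (x ^ q) ^ q = x := by
  rw [← pow_mul, ← sq, ← hF, FiniteField.pow_card]

theorem neg_one_pow_of_card_eq_sq (hF : Fintype.card F = q ^ 2) : (-1 : F) ^ q = -1 := by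
  have h := add_pow_of_card_eq_sq hF (1 : F) (-1)
  rw [add_neg_cancel, zero_pow (one_lt_of_card_eq_sq hF).ne_bot, one_pow] at h
  exact (neg_eq_of_add_eq_zero_right h.symm).symm

theorem charP_two_of_card_eq_sq (hF : Fintype.card F = q ^ 2) (hq : Even q) : CharP F 2 :=
  ringChar.of_eq <| FiniteField.even_card_iff_char_two.2 <|
    hF ▸ Nat.even_iff.1 (hq.pow_of_ne_zero two_ne_zero)

theorem ncard_setOf_norm_eq (hF : Fintype.card F = q ^ 2) {b : F} (hb : b ≠ 0) (hbq : b ^ q = b) :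
    {x : F | x ^ (q + 1) = b}.ncard = q + 1 := by
  have hq := one_lt_of_card_eq_sq hF
  have hcard : Nat.card Fˣ = (q + 1) * (q - 1) := by
    rw [Nat.card_units, Nat.card_eq_fintype_card, hF]
    simpa using Nat.sq_sub_sq q 1
  have hu : Units.mk0 b hb ^ (q - 1) = 1 := by
    refine Units.ext (mul_right_cancel₀ hb ?_)
    rw [Units.val_pow_eq_pow_val, Units.val_mk0, ← pow_succ, Nat.sub_add_cancel hq.le, hbq,
      Units.val_one, one_mul]
  have himage : {x : F | x ^ (q + 1) = b} =
      Units.val '' {x : Fˣ | x ^ (q + 1) = Units.mk0 b hb} := by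
    ext x
    refine ⟨fun hx => ?_, ?_⟩
    · have hx0 : x ≠ 0 := by rintro rfl; exact hb (by simpa using hx.symm)
      exact ⟨Units.mk0 x hx0, Units.ext hx, rfl⟩
    · rintro ⟨x, hx, rfl⟩
      exact congrArg Units.val hx
  rw [himage, Set.ncard_image_of_injective _ Units.val_injective, ncard_setOf_pow_eq hcard hu]

theorem ncard_setOf_norm_sub_norm_eq_one (hF : Fintype.card F = q ^ 2) :
    {p : F × F | p.1 ^ (q + 1) - p.2 ^ (q + 1) = 1}.ncard = (q + 1) * (q * (q - 1)) := by
  classical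
  have hneg := neg_one_pow_of_card_eq_sq hF
  have hfiber (y : F) : {x : F | x ^ (q + 1) - y ^ (q + 1) = 1}.ncard =
      if y ^ (q + 1) = -1 then 1 else q + 1 := by
    simp only [sub_eq_iff_eq_add]
    split_ifs with hy
    · simp [hy]
    · refine ncard_setOf_norm_eq hF (fun h0 => hy (neg_eq_of_add_eq_zero_right h0).symm) ?_
      rw [add_pow_of_card_eq_sq hF, one_pow, ← pow_mul, mul_comm, pow_mul, pow_succ,
        pow_pow_of_card_eq_sq hF, mul_comm, ← pow_succ]
  have hsum : {p : F × F | p.1 ^ (q + 1) - p.2 ^ (q + 1) = 1}.ncard =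
      ∑ y : F, if y ^ (q + 1) = -1 then 1 else q + 1 := by
    simp only [← hfiber, Set.ncard_eq_toFinset_card', Set.toFinset_ofPred, Finset.card_filter,
      Fintype.sum_prod_type_right]
  have hroots : (Finset.univ.filter fun y : F => y ^ (q + 1) = -1).card = q + 1 := by
    simpa only [Set.ncard_eq_toFinset_card', Set.toFinset_ofPred] using
      ncard_setOf_norm_eq hF (neg_ne_zero.2 one_ne_zero) hneg
  have hcompl := Finset.card_filter_add_card_filter_not (s := Finset.univ)
    (fun y : F => y ^ (q + 1) = -1)
  rw [hroots, Finset.card_univ, hF] at hcompl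
  rw [hsum, Finset.sum_ite, Finset.sum_const, Finset.sum_const, hroots, smul_eq_mul, smul_eq_mul]
  zify [(one_lt_of_card_eq_sq hF).le] at hcompl ⊢
  linear_combination ((q : ℤ) + 1) * hcompl

end Norm

section Product

variable {G : Type*} [Group G] {H K : Subgroup G}

theorem exists_mul_eq_of_mem_sup (hcomm : ∀ h ∈ H, ∀ k ∈ K, Commute h k) {g : G}
    (hg : g ∈ H ⊔ K) : ∃ h ∈ H, ∃ k ∈ K, h * k = g := by
  rwa [← SetLike.mem_coe, Subgroup.coe_mul_of_left_le_normalizer_right, Set.mem_mul] at hg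
  exact fun h hh => Subgroup.centralizer_le_normalizer _ <|
    Subgroup.mem_centralizer_iff.2 fun k hk => (hcomm h hh k hk).eq.symm

theorem card_sup_of_commute_of_disjoint (hcomm : ∀ h ∈ H, ∀ k ∈ K, Commute h k)
    (hdisj : Disjoint H K) : Nat.card ↥(H ⊔ K) = Nat.card H * Nat.card K := by
  let f : H × K →* G := H.subtype.noncommCoprod K.subtype fun h k => hcomm h h.2 k k.2
  have hf : Function.Injective f := (MonoidHom.noncommCoprod_injective _ _ _).2
    ⟨H.subtype_injective, K.subtype_injective, by simpa only [Subgroup.range_subtype]⟩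
  have hrange : f.range = H ⊔ K :=
    (MonoidHom.noncommCoprod_range _ _ _).trans (by simp only [Subgroup.range_subtype])
  rw [← hrange, ← Nat.card_prod, Nat.card_congr (MonoidHom.ofInjective hf).toEquiv]

theorem orbit_sup_eq_orbit {X : Type*} [MulAction G X]
    (hcomm : ∀ h ∈ H, ∀ k ∈ K, Commute h k) {x : X} (hx : ∀ k ∈ K, k • x = x) :
    MulAction.orbit ↥(H ⊔ K) x = MulAction.orbit H x := by
  ext y
  constructor
  · rintro ⟨⟨g, hg⟩, rfl⟩
    obtain ⟨h, hh, k, hk, rfl⟩ := exists_mul_eq_of_mem_sup hcomm hg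
    exact ⟨⟨h, hh⟩, by simp only [Subgroup.mk_smul, mul_smul, hx k hk]⟩
  · rintro ⟨⟨h, hh⟩, rfl⟩
    exact ⟨⟨h, Subgroup.mem_sup_left hh⟩, rfl⟩

end Product

section Orbits

open MulAction

variable {G X : Type*} [Group G] [MulAction G X]

theorem ncard_image_orbit (s : SubMulAction G X) :
    (orbit G '' (s : Set X)).ncard = Nat.card (orbitRel.Quotient G s) := by
  let f : orbitRel.Quotient G s → Set X := fun c => Subtype.val '' c.orbit
  have hf : Function.Injective f :=
    Subtype.val_injective.image_injective.comp (orbitRel.Quotient.orbit_injective)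
  have hrange : Set.range f = orbit G '' (s : Set X) := by
    ext y
    constructor
    · rintro ⟨c, rfl⟩
      induction c using Quotient.inductionOn' with
      | h x => exact ⟨x, x.2, (SubMulAction.val_image_orbit x).symm⟩
    · rintro ⟨x, hx, rfl⟩
      exact ⟨Quotient.mk'' ⟨x, hx⟩, SubMulAction.val_image_orbit _⟩
  rw [← hrange, ← Nat.card_coe_set_eq, Nat.card_range_of_injective hf]

theorem ncard_image_orbit_union [Finite X] {s t : SubMulAction G X}
    (h : Disjoint (s : Set X) t) :
    (orbit G '' (s ∪ t : Set X)).ncard =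
      (orbit G '' (s : Set X)).ncard + (orbit G '' (t : Set X)).ncard := by
  rw [Set.image_union]
  refine Set.ncard_union_eq (Set.disjoint_left.2 ?_)
  rintro _ ⟨x, hx, rfl⟩ ⟨y, hy, hxy⟩
  obtain ⟨g, rfl⟩ : x ∈ orbit G y := hxy ▸ mem_orbit_self x
  exact Set.disjoint_left.1 h hx (t.smul_mem g hy)

theorem ncard_image_orbit_mul_card_of_free (s : SubMulAction G X)
    (hfree : ∀ g : G, ∀ x ∈ s, g • x = x → g = 1) :
    (orbit G '' (s : Set X)).ncard * Nat.card G = (s : Set X).ncard := by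
  have hstab (x : s) : stabilizer G x = ⊥ :=
    (Subgroup.eq_bot_iff_forall _).2 fun g hg =>
      hfree g x x.2 (congrArg Subtype.val (mem_stabilizer_iff.1 hg))
  rw [ncard_image_orbit, ← Nat.card_prod]
  exact (Nat.card_congr (selfEquivOrbitsQuotientProd hstab)).symm

theorem sum_natCard_fixedBy [Fintype G] [Finite X] :
    ∑ g : G, Nat.card (fixedBy X g) = Nat.card (orbitRel.Quotient G X) * Nat.card G := by
  classical
  have := Fintype.ofFinite X
  have := Fintype.ofFinite (Quotient (orbitRel G X))
  simp only [Nat.card_eq_fintype_card]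
  exact sum_card_fixedBy_eq_card_orbits_mul_card_group G X

theorem natCard_fixedBy_subMulAction (s : SubMulAction G X) (g : G) :
    Nat.card (fixedBy s g) = ((s : Set X) ∩ fixedBy X g).ncard := by
  have himage : Subtype.val '' fixedBy s g = (s : Set X) ∩ fixedBy X g := by
    ext x
    constructor
    · rintro ⟨y, hy, rfl⟩
      exact ⟨y.2, congrArg Subtype.val hy⟩
    · rintro ⟨hx, hgx⟩
      exact ⟨⟨x, hx⟩, Subtype.ext hgx, rfl⟩
  rw [← himage, Set.ncard_image_of_injective _ Subtype.val_injective, Nat.card_coe_set_eq]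

theorem odd_natCard_fixedBy [Finite X] (hX : Odd (Nat.card X)) {g : G} (hg : g ^ 2 = 1) :
    Odd (Nat.card (fixedBy X g)) := by
  classical
  have := Fintype.ofFinite X
  let f : Function.End X := toEndHom g
  have hf : f ^ 2 ^ 1 = 1 := by rw [pow_one, ← map_pow, hg, map_one]
  have hmod : Nat.card X ≡ Nat.card (fixedBy X g) [MOD 2] := by
    have h := Equiv.Perm.card_fixedPoints_modEq hf
    rwa [← Nat.card_eq_fintype_card, ← Nat.card_eq_fintype_card] at h
  rwa [Nat.odd_iff, ← hmod, ← Nat.odd_iff]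

end Orbits

section Dihedral

open MulAction

theorem sum_dihedralGroup {M : Type*} [AddCommMonoid M] {t : ℕ} [NeZero t]
    (f : DihedralGroup t → M) :
    ∑ d, f d = ∑ i, f (.r i) + ∑ i, f (.sr i) := by
  rw [← DihedralGroup.equivSum.symm.sum_comp, Fintype.sum_sum_type]
  rfl

-- This is Burnside's formula for a dihedral group of order `2 * t`, with `S` the number of fixed
-- points of the nontrivial rotations: it forces `2 * t ∣ S + 2`, which leaves one value of `S`.
theorem eq_add_three_of_add_eq_mul {t k S N : ℕ} (hk : Odd k) (hS : S + 2 ≤ 2 * t)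
    (h : t * k + 2 + S + t = N * (2 * t)) : 2 * N = k + 3 := by
  obtain ⟨j, rfl⟩ := hk
  have hdvd : 2 * t ∣ S + 2 := by
    refine (Nat.dvd_add_right (Dvd.intro (j + 1) rfl)).1 (Dvd.intro_left N (h.symm.trans ?_))
    ring
  have hS2 : S + 2 = 2 * t := le_antisymm hS (Nat.le_of_dvd (by omega) hdvd)
  have ht : 0 < t := by omega
  refine Nat.eq_of_mul_eq_mul_left ht ?_
  linear_combination hS2 - h

variable {G X : Type*} [Group G] [MulAction G X]

theorem two_mul_card_orbits_of_dihedral [Finite X] {t k : ℕ} (e : DihedralGroup t ≃* G)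
    (hX : Nat.card X = t * k + 2) (hodd : Odd (t * k))
    (hfix : ∀ g : G, g ≠ 1 → Nat.card (fixedBy X g) ≤ 2) :
    2 * Nat.card (orbitRel.Quotient G X) = k + 3 := by
  obtain ⟨ht, hk⟩ := Nat.odd_mul.1 hodd
  have : NeZero t := ⟨ht.pos.ne'⟩
  let _ : Fintype G := Fintype.ofEquiv _ e.toEquiv
  have hrefl (i : ZMod t) : Nat.card (fixedBy X (e (.sr i))) = 1 := by
    have hle := hfix (e (.sr i)) ((map_ne_one_iff e e.injective).2 nofun)
    have hinv : e (.sr i) ^ 2 = 1 := by rw [← map_pow, sq, DihedralGroup.sr_mul_self, map_one]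
    have hX' : Odd (Nat.card X) := hX ▸ hodd.add_even even_two
    obtain ⟨m, hm⟩ := odd_natCard_fixedBy hX' hinv
    omega
  have hone : Nat.card (fixedBy X (e (.r 0))) = t * k + 2 := by
    rw [DihedralGroup.r_zero, map_one, fixedBy_one_eq_univ, Nat.card_univ, hX]
  have hrot :
      ∑ i ∈ Finset.univ.erase (0 : ZMod t), Nat.card (fixedBy X (e (.r i))) + 2 ≤ 2 * t := by
    have h := Finset.sum_le_card_nsmul (Finset.univ.erase (0 : ZMod t)) _ 2 fun i hi =>
      hfix (e (.r i)) <| (map_ne_one_iff e e.injective).2 fun h =>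
        Finset.ne_of_mem_erase hi (DihedralGroup.r.inj h)
    rw [Finset.card_erase_of_mem (Finset.mem_univ _), Finset.card_univ, ZMod.card, smul_eq_mul] at h
    have := ht.pos
    omega
  have hburnside : ∑ d, Nat.card (fixedBy X (e d)) =
      Nat.card (orbitRel.Quotient G X) * (2 * t) := by
    rw [← DihedralGroup.nat_card, Nat.card_congr e.toEquiv, ← sum_natCard_fixedBy]
    exact e.toEquiv.sum_comp fun g => Nat.card (fixedBy X g)
  rw [sum_dihedralGroup, ← Finset.add_sum_erase _ _ (Finset.mem_univ (0 : ZMod t)), hone]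
    at hburnside
  simp only [hrefl, Finset.sum_const, Finset.card_univ, ZMod.card, smul_eq_mul, mul_one]
    at hburnside
  exact eq_add_three_of_add_eq_mul hk hrot hburnside

end Dihedral

section Polynomial

open Polynomial

theorem ncard_setOf_quadratic_eq_zero_le_two {R : Type*} [CommRing R] [IsDomain R] {a b c : R}
    (h : ¬(a = 0 ∧ b = 0 ∧ c = 0)) : {x : R | a * x ^ 2 + b * x + c = 0}.ncard ≤ 2 := by
  classical
  set p : R[X] := C a * X ^ 2 + C b * X + C c with hp
  have hp0 : p ≠ 0 := by
    intro h0
    refine h ⟨?_, ?_, ?_⟩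
    · simpa [hp, coeff_X, coeff_C] using congrArg (coeff · 2) h0
    · simpa [hp, coeff_X, coeff_C] using congrArg (coeff · 1) h0
    · simpa [hp] using congrArg (coeff · 0) h0
  have hroots : {x : R | a * x ^ 2 + b * x + c = 0} = p.roots.toFinset := by
    ext x
    rw [Finset.mem_coe, Multiset.mem_toFinset, mem_roots hp0]
    simp [hp]
  calc {x : R | a * x ^ 2 + b * x + c = 0}.ncard = p.roots.toFinset.card := by
        rw [hroots, Set.ncard_coe_finset]
    _ ≤ p.natDegree := p.roots.toFinset_card_le.trans p.card_roots'
    _ ≤ 2 := natDegree_quadratic_le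

end Polynomial

section Hermitian

open MulAction Projectivization

variable {F : Type*} [Field F] {q : ℕ} {M : GL (Fin 3) F}

theorem glAct_eq_smul (x : Projectivization F (Fin 3 → F)) : glAct M x = M • x :=
  rfl

theorem numOrbits_eq_ncard_image_orbit (L : Subgroup (GL (Fin 3) F))
    (O : Set (Projectivization F (Fin 3 → F))) : numOrbits L O = (orbit L '' O).ncard := by
  simp only [numOrbits, glAct_eq_smul, Nat.card_coe_set_eq]
  congr 1
  refine Set.image_congr fun x _ => Set.ext fun y => ?_
  exact ⟨fun ⟨g, hg, hy⟩ => ⟨⟨g, hg⟩, hy⟩, fun ⟨g, hy⟩ => ⟨g, g.2, hy⟩⟩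

theorem mk_mem_hermitianPts {v : Fin 3 → F} (hv : v ≠ 0) :
    mk F v hv ∈ hermitianPts q F ↔ v 1 ^ (q + 1) = v 0 ^ (q + 1) - v 2 ^ (q + 1) := by
  obtain ⟨a, ha⟩ := exists_smul_eq_mk_rep F v hv
  simp only [hermitianPts, Set.mem_ofPred_eq, ← ha, Pi.smul_apply, Units.smul_def, smul_eq_mul,
    mul_pow, ← mul_sub]
  exact mul_right_inj' (pow_ne_zero _ a.ne_zero)

/-- The line `Z = 0` of the projective plane. -/
def lineAtInfinity (F : Type*) [Field F] : Set (Projectivization F (Fin 3 → F)) :=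
  {x | x.rep 2 = 0}

theorem mk_mem_lineAtInfinity {v : Fin 3 → F} (hv : v ≠ 0) :
    mk F v hv ∈ lineAtInfinity F ↔ v 2 = 0 := by
  obtain ⟨a, ha⟩ := exists_smul_eq_mk_rep F v hv
  simp only [lineAtInfinity, Set.mem_ofPred_eq, ← ha, Pi.smul_apply, Units.smul_def, smul_eq_mul,
    mul_eq_zero, a.ne_zero, false_or]

/-- The point `(x : y : 1)` of the projective plane with affine coordinates `(x, y)`. -/
def affinePoint (p : F × F) : Projectivization F (Fin 3 → F) :=
  mk F ![p.1, p.2, 1] fun h => one_ne_zero (congrFun h 2)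

/-- The point `(1 : y : 0)` of the line at infinity, where the affine lines of slope `y` meet. -/
def infinitePoint (y : F) : Projectivization F (Fin 3 → F) :=
  mk F ![1, y, 0] fun h => one_ne_zero (congrFun h 0)

theorem mk_eq_affinePoint {v : Fin 3 → F} (hv : v ≠ 0) (h : v 2 ≠ 0) :
    mk F v hv = affinePoint (v 0 / v 2, v 1 / v 2) := by
  refine (mk_eq_mk_iff' F _ _ _ _).2 ⟨v 2, ?_⟩
  ext i
  fin_cases i <;> simp [mul_div_cancel₀, h]

theorem mk_eq_infinitePoint {v : Fin 3 → F} (hv : v ≠ 0) (h0 : v 0 ≠ 0) (h2 : v 2 = 0) :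
    mk F v hv = infinitePoint (v 1 / v 0) := by
  refine (mk_eq_mk_iff' F _ _ _ _).2 ⟨v 0, ?_⟩
  ext i
  fin_cases i <;> simp [mul_div_cancel₀, h0, h2]

theorem affinePoint_injective : Function.Injective (affinePoint (F := F)) := by
  intro p r h
  obtain ⟨a, ha⟩ := (mk_eq_mk_iff' F _ _ _ _).1 h
  obtain rfl : a = 1 := by simpa using congrFun ha 2
  exact Prod.ext (by simpa using (congrFun ha 0).symm) (by simpa using (congrFun ha 1).symm)

theorem infinitePoint_injective : Function.Injective (infinitePoint (F := F)) := by
  intro y z h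
  obtain ⟨a, ha⟩ := (mk_eq_mk_iff' F _ _ _ _).1 h
  obtain rfl : a = 1 := by simpa using congrFun ha 0
  simpa using (congrFun ha 1).symm

theorem hermitianPts_diff_lineAtInfinity :
    hermitianPts q F \ lineAtInfinity F =
      affinePoint '' {p : F × F | p.1 ^ (q + 1) - p.2 ^ (q + 1) = 1} := by
  have hmem (p : F × F) :
      affinePoint p ∈ hermitianPts q F ↔ p.1 ^ (q + 1) - p.2 ^ (q + 1) = 1 := by
    simp only [affinePoint, mk_mem_hermitianPts, cons_val, one_pow]
    exact ⟨fun h => by linear_combination -h, fun h => by linear_combination -h⟩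
  ext x
  constructor
  · rintro ⟨hx, hx'⟩
    induction x using Projectivization.ind with
    | h v hv =>
      rw [mk_mem_lineAtInfinity] at hx'
      rw [mk_eq_affinePoint hv hx'] at hx ⊢
      exact ⟨_, (hmem _).1 hx, rfl⟩
  · rintro ⟨p, hp, rfl⟩
    exact ⟨(hmem p).2 hp, fun h => one_ne_zero ((mk_mem_lineAtInfinity _).1 h)⟩

theorem hermitianPts_inter_lineAtInfinity :
    hermitianPts q F ∩ lineAtInfinity F = infinitePoint '' {y : F | y ^ (q + 1) = 1} := by
  have hmem (y : F) : infinitePoint y ∈ hermitianPts q F ↔ y ^ (q + 1) = 1 := by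
    simp [infinitePoint, mk_mem_hermitianPts]
  ext x
  constructor
  · rintro ⟨hx, hx'⟩
    induction x using Projectivization.ind with
    | h v hv =>
      rw [mk_mem_lineAtInfinity] at hx'
      have h0 : v 0 ≠ 0 := by
        intro h0
        have h1 : v 1 = 0 := by simpa [h0, hx'] using (mk_mem_hermitianPts hv).1 hx
        exact hv (funext fun i => by fin_cases i <;> assumption)
      rw [mk_eq_infinitePoint hv h0 hx'] at hx ⊢
      exact ⟨_, (hmem _).1 hx, rfl⟩
  · rintro ⟨y, hy, rfl⟩
    exact ⟨(hmem y).2 hy, (mk_mem_lineAtInfinity _).2 rfl⟩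

theorem smul_eq_of_coe_eq {a b c d : F}
    (hM : (M : Matrix (Fin 3) (Fin 3) F) = !![a, b, 0; c, d, 0; 0, 0, 1]) (v : Fin 3 → F) :
    M • v = ![a * v 0 + b * v 1, c * v 0 + d * v 1, v 2] := by
  rw [Units.smul_def, hM, smul_eq_mulVec]
  ext i
  fin_cases i <;> simp [mulVec, dotProduct, Fin.sum_univ_three]

theorem smul_affinePoint {a b c d : F}
    (hM : (M : Matrix (Fin 3) (Fin 3) F) = !![a, b, 0; c, d, 0; 0, 0, 1]) (p : F × F) :
    M • affinePoint p = affinePoint (a * p.1 + b * p.2, c * p.1 + d * p.2) := by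
  simp only [affinePoint, smul_mk, smul_eq_of_coe_eq hM, cons_val]

theorem smul_infinitePoint_eq_self_iff {a b c d : F}
    (hM : (M : Matrix (Fin 3) (Fin 3) F) = !![a, b, 0; c, d, 0; 0, 0, 1]) {y : F} :
    M • infinitePoint y = infinitePoint y ↔ b * y ^ 2 + (a - d) * y + -c = 0 := by
  have hsmul : M • ![1, y, 0] = ![a + b * y, c + d * y, 0] := by
    simp only [smul_eq_of_coe_eq hM, cons_val, mul_one]
  simp only [infinitePoint, smul_mk, mk_eq_mk_iff', hsmul]
  constructor
  · rintro ⟨r, hr⟩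
    have h0 : r = a + b * y := by simpa using congrFun hr 0
    have h1 : r * y = c + d * y := by simpa using congrFun hr 1
    linear_combination h1 - y * h0
  · intro h
    refine ⟨a + b * y, ?_⟩
    ext i
    fin_cases i
    · simp
    · simp only [Fin.mk_one, Pi.smul_apply, cons_val_one, cons_val_zero, smul_eq_mul]
      linear_combination h
    · simp

theorem smul_mem_lineAtInfinity_iff (hM : M ∈ MlSet q F) {x : Projectivization F (Fin 3 → F)} :
    M • x ∈ lineAtInfinity F ↔ x ∈ lineAtInfinity F := by
  obtain ⟨a, c, τ, -, -, hM⟩ := hM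
  induction x using Projectivization.ind with
  | h v hv => rw [smul_mk, mk_mem_lineAtInfinity, mk_mem_lineAtInfinity, smul_eq_of_coe_eq hM]; rfl

theorem det_eq_of_coe_eq {a c τ : F} (hac : a ^ (q + 1) - c ^ (q + 1) = 1)
    (hM : (M : Matrix (Fin 3) (Fin 3) F) = !![a, τ * c ^ q, 0; c, τ * a ^ q, 0; 0, 0, 1]) :
    (M : Matrix (Fin 3) (Fin 3) F).det = τ := by
  rw [hM, det_fin_three]
  simp only [of_apply, cons_val]
  linear_combination τ * hac

theorem exists_coe_eq_of_det_eq_one (hM : M ∈ MlSet q F)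
    (hdet : (M : Matrix (Fin 3) (Fin 3) F).det = 1) :
    ∃ a c : F, a ^ (q + 1) - c ^ (q + 1) = 1 ∧
      (M : Matrix (Fin 3) (Fin 3) F) = !![a, c ^ q, 0; c, a ^ q, 0; 0, 0, 1] := by
  obtain ⟨a, c, τ, hac, -, hM⟩ := hM
  obtain rfl : τ = 1 := (det_eq_of_coe_eq hac hM).symm.trans hdet
  exact ⟨a, c, hac, by simpa only [one_mul] using hM⟩

theorem det_eq_one_of_pow_eq_one (hM : M ∈ MlSet q F) {n : ℕ} (hn : n.Coprime (q + 1))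
    (hMn : M ^ n = 1) : (M : Matrix (Fin 3) (Fin 3) F).det = 1 := by
  obtain ⟨a, c, τ, hac, hτ, hM⟩ := hM
  have hdet := det_eq_of_coe_eq hac hM
  have hτn : τ ^ n = 1 := by
    rw [← hdet, ← det_pow, ← Units.val_pow_eq_pow_val, hMn, Units.val_one, det_one]
  rw [hdet, ← pow_one τ, ← hn.gcd_eq_one]
  exact pow_gcd_eq_one.2 ⟨hτn, hτ⟩

theorem exists_coe_eq_of_mem_ZSet {z : GL (Fin 3) F} (hz : z ∈ ZSet q F) :
    ∃ ε : F, ε ^ (q + 1) = 1 ∧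
      (z : Matrix (Fin 3) (Fin 3) F) = !![ε, 0, 0; 0, ε, 0; 0, 0, 1] := by
  obtain ⟨ε, hε, hz⟩ := hz
  refine ⟨ε, hε, hz.trans ?_⟩
  ext i j
  fin_cases i <;> fin_cases j <;> rfl

theorem pow_eq_one_of_mem_ZSet {z : GL (Fin 3) F} (hz : z ∈ ZSet q F) : z ^ (q + 1) = 1 := by
  obtain ⟨ε, hε, hz⟩ := hz
  refine Units.ext ?_
  rw [Units.val_pow_eq_pow_val, hz, diagonal_pow, Units.val_one, ← diagonal_one]
  congr 1
  ext i
  fin_cases i <;> simp [hε]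

theorem commute_of_mem_MlSet_of_mem_ZSet (hM : M ∈ MlSet q F) {z : GL (Fin 3) F}
    (hz : z ∈ ZSet q F) : Commute M z := by
  obtain ⟨a, c, τ, -, -, hM⟩ := hM
  obtain ⟨ε, -, hz⟩ := exists_coe_eq_of_mem_ZSet hz
  refine Units.ext ?_
  rw [Units.val_mul, Units.val_mul, hM, hz]
  ext i j
  fin_cases i <;> fin_cases j <;> simp [mul_comm]

theorem smul_eq_self_of_mem_ZSet {z : GL (Fin 3) F} (hz : z ∈ ZSet q F)
    {x : Projectivization F (Fin 3 → F)} (hx : x ∈ lineAtInfinity F) : z • x = x := by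
  obtain ⟨ε, -, hz⟩ := exists_coe_eq_of_mem_ZSet hz
  induction x using Projectivization.ind with
  | h v hv =>
    rw [mk_mem_lineAtInfinity] at hx
    rw [smul_mk, mk_eq_mk_iff', smul_eq_of_coe_eq hz]
    refine ⟨ε, ?_⟩
    ext i
    fin_cases i <;> simp [hx]

theorem eq_one_of_mem_ZSet_of_smul_eq_self {z : GL (Fin 3) F} (hz : z ∈ ZSet q F)
    {x : Projectivization F (Fin 3 → F)} (hx : x ∈ hermitianPts q F \ lineAtInfinity F)
    (hzx : z • x = x) : z = 1 := by
  obtain ⟨ε, -, hz⟩ := exists_coe_eq_of_mem_ZSet hz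
  rw [hermitianPts_diff_lineAtInfinity] at hx
  obtain ⟨⟨x, y⟩, hxy, rfl⟩ := hx
  rw [smul_affinePoint hz, affinePoint_injective.eq_iff, Prod.mk.injEq] at hzx
  have hε : ε = 1 := by
    by_contra hε
    obtain rfl : x = 0 := by_contra fun h => hε <| mul_right_cancel₀ h <| by
      linear_combination hzx.1
    obtain rfl : y = 0 := by_contra fun h => hε <| mul_right_cancel₀ h <| by
      linear_combination hzx.2
    simp at hxy
  exact Units.ext (hz.trans (by rw [hε, Units.val_one, one_fin_three]))

/-- The subgroup with carrier `ZSet q F`, the center of the group with carrier `MlSet q F`. -/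
def centralSubgroup (q : ℕ) (F : Type*) [Field F] : Subgroup (GL (Fin 3) F) where
  carrier := ZSet q F
  one_mem' := ⟨1, one_pow _, by
    rw [Units.val_one, ← diagonal_one]
    congr 1
    ext i
    fin_cases i <;> rfl⟩
  mul_mem' := by
    rintro z z' ⟨ε, hε, hz⟩ ⟨ε', hε', hz'⟩
    refine ⟨ε * ε', by rw [mul_pow, hε, hε', one_mul], ?_⟩
    rw [Units.val_mul, hz, hz', diagonal_mul_diagonal]
    congr 1
    ext i
    fin_cases i <;> simp
  inv_mem' := by
    rintro z hz
    rw [inv_eq_of_mul_eq_one_left ((pow_succ z q).symm.trans (pow_eq_one_of_mem_ZSet hz))]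
    obtain ⟨ε, hε, hz⟩ := hz
    refine ⟨ε ^ q, by rw [← pow_mul, mul_comm, pow_mul, hε, one_pow], ?_⟩
    rw [Units.val_pow_eq_pow_val, hz, diagonal_pow]
    congr 1
    ext i
    fin_cases i <;> simp

variable {D Z : Subgroup (GL (Fin 3) F)}

theorem commute_of_subset_MlSet_of_le_centralSubgroup (hD : (D : Set (GL (Fin 3) F)) ⊆ MlSet q F)
    (hZ : Z ≤ centralSubgroup q F) : ∀ d ∈ D, ∀ z ∈ Z, Commute d z :=
  fun _ hd _ hz => commute_of_mem_MlSet_of_mem_ZSet (hD hd) (hZ hz)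

theorem exists_le_centralSubgroup_eq_sup {L : Subgroup (GL (Fin 3) F)}
    (hgen : L = Subgroup.closure
      ((D : Set (GL (Fin 3) F)) ∪ ((L : Set (GL (Fin 3) F)) ∩ ZSet q F)))
    (htriv : (D : Set (GL (Fin 3) F)) ∩ ((L : Set (GL (Fin 3) F)) ∩ ZSet q F) ⊆ {1}) :
    ∃ Z ≤ centralSubgroup q F, Nat.card Z = ((L : Set (GL (Fin 3) F)) ∩ ZSet q F).ncard ∧
      Disjoint D Z ∧ L = D ⊔ Z := by
  refine ⟨L ⊓ centralSubgroup q F, inf_le_right, rfl, ?_, ?_⟩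
  · exact Subgroup.disjoint_def.2 fun hd hz => htriv ⟨hd, hz⟩
  · rw [Subgroup.sup_eq_closure, Subgroup.coe_inf]
    exact hgen

theorem ncard_infinite_inter_fixedBy_le_two [Finite F] [CharP F 2] (hM : M ∈ MlSet q F)
    (hdet : (M : Matrix (Fin 3) (Fin 3) F).det = 1) (hM1 : M ≠ 1) :
    (hermitianPts q F ∩ lineAtInfinity F ∩
      fixedBy (Projectivization F (Fin 3 → F)) M).ncard ≤ 2 := by
  obtain ⟨a, c, hac, hM⟩ := exists_coe_eq_of_det_eq_one hM hdet
  have hcoeff : ¬(c ^ q = 0 ∧ a - a ^ q = 0 ∧ -c = 0) := by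
    rintro ⟨hcq, ha, hc⟩
    have ha2 : (a + 1) ^ 2 = 0 := by
      rw [CharTwo.add_sq, ← CharTwo.sub_eq_add]
      linear_combination a * ha + c * hcq + hac
    have ha1 : a = 1 := CharTwo.add_eq_zero.1 (eq_zero_of_pow_eq_zero ha2)
    refine hM1 (Units.ext ?_)
    rw [hM, hcq, neg_eq_zero.1 hc, ha1, one_pow, Units.val_one, one_fin_three]
  have hsub : hermitianPts q F ∩ lineAtInfinity F ∩ fixedBy _ M ⊆
      infinitePoint '' {y : F | c ^ q * y ^ 2 + (a - a ^ q) * y + -c = 0} := by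
    rw [hermitianPts_inter_lineAtInfinity]
    rintro _ ⟨⟨y, -, rfl⟩, hy⟩
    exact ⟨y, (smul_infinitePoint_eq_self_iff hM).1 hy, rfl⟩
  exact (Set.ncard_le_ncard hsub).trans <|
    (Set.ncard_image_le (Set.toFinite _)).trans (ncard_setOf_quadratic_eq_zero_le_two hcoeff)

section Finite

variable [Fintype F]

theorem ncard_hermitianPts_diff_lineAtInfinity (hF : Fintype.card F = q ^ 2) :
    (hermitianPts q F \ lineAtInfinity F).ncard = (q + 1) * (q * (q - 1)) := by
  rw [hermitianPts_diff_lineAtInfinity, Set.ncard_image_of_injective _ affinePoint_injective,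
    ncard_setOf_norm_sub_norm_eq_one hF]

theorem ncard_hermitianPts_inter_lineAtInfinity (hF : Fintype.card F = q ^ 2) :
    (hermitianPts q F ∩ lineAtInfinity F).ncard = q + 1 := by
  rw [hermitianPts_inter_lineAtInfinity, Set.ncard_image_of_injective _ infinitePoint_injective,
    ncard_setOf_norm_eq hF one_ne_zero (one_pow q)]

theorem smul_mem_hermitianPts (hF : Fintype.card F = q ^ 2) (hM : M ∈ MlSet q F)
    {x : Projectivization F (Fin 3 → F)} (hx : x ∈ hermitianPts q F) :
    M • x ∈ hermitianPts q F := by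
  obtain ⟨a, c, τ, hac, hτ, hM⟩ := hM
  induction x using Projectivization.ind with
  | h v hv =>
    rw [mk_mem_hermitianPts] at hx
    rw [smul_mk, mk_mem_hermitianPts, smul_eq_of_coe_eq hM]
    simp only [cons_val, pow_succ _ q, add_pow_of_card_eq_sq hF, mul_pow,
      pow_pow_of_card_eq_sq hF] at hx hac hτ ⊢
    linear_combination (τ * τ ^ q) * (a ^ q * a - c ^ q * c) * hx - (v 2 ^ q * v 2) * hac
      + (v 0 ^ q * v 0) * (a ^ q * a - c ^ q * c) * hτ
      - (v 2 ^ q * v 2) * (a ^ q * a - c ^ q * c) * hτ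

/-- The affine part of the Hermitian curve, as a set on which a subgroup of `GL (Fin 3) F` with
underlying set contained in `MlSet q F` acts. -/
def affinePart (hF : Fintype.card F = q ^ 2) {L : Subgroup (GL (Fin 3) F)}
    (hL : (L : Set (GL (Fin 3) F)) ⊆ MlSet q F) :
    SubMulAction L (Projectivization F (Fin 3 → F)) where
  carrier := hermitianPts q F \ lineAtInfinity F
  smul_mem' g _ hx :=
    ⟨smul_mem_hermitianPts hF (hL g.2) hx.1, (smul_mem_lineAtInfinity_iff (hL g.2)).not.2 hx.2⟩

/-- The points at infinity of the Hermitian curve, as a set on which a subgroup of `GL (Fin 3) F`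
with underlying set contained in `MlSet q F` acts. -/
def infinitePart (hF : Fintype.card F = q ^ 2) {L : Subgroup (GL (Fin 3) F)}
    (hL : (L : Set (GL (Fin 3) F)) ⊆ MlSet q F) :
    SubMulAction L (Projectivization F (Fin 3 → F)) where
  carrier := hermitianPts q F ∩ lineAtInfinity F
  smul_mem' g _ hx :=
    ⟨smul_mem_hermitianPts hF (hL g.2) hx.1, (smul_mem_lineAtInfinity_iff (hL g.2)).2 hx.2⟩

theorem numOrbits_hermitianPts (hF : Fintype.card F = q ^ 2) {L : Subgroup (GL (Fin 3) F)}
    (hL : (L : Set (GL (Fin 3) F)) ⊆ MlSet q F) :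
    numOrbits L (hermitianPts q F) = numOrbits L (hermitianPts q F ∩ lineAtInfinity F) +
      numOrbits L (hermitianPts q F \ lineAtInfinity F) := by
  have hdisj : Disjoint (infinitePart hF hL : Set (Projectivization F (Fin 3 → F)))
      (affinePart hF hL) := Set.disjoint_sdiff_inter.symm
  simp only [numOrbits_eq_ncard_image_orbit]
  refine Eq.trans ?_ (ncard_image_orbit_union hdisj)
  exact congrArg (fun s => (orbit L '' s).ncard) (Set.inter_union_sdiff _ _).symm

theorem eq_one_of_det_eq_one_of_smul_eq_self (hF : Fintype.card F = q ^ 2) (hM : M ∈ MlSet q F)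
    (hdet : (M : Matrix (Fin 3) (Fin 3) F).det = 1) {x : Projectivization F (Fin 3 → F)}
    (hx : x ∈ hermitianPts q F \ lineAtInfinity F) (hMx : M • x = x) : M = 1 := by
  obtain ⟨a, c, hac, hM⟩ := exists_coe_eq_of_det_eq_one hM hdet
  rw [hermitianPts_diff_lineAtInfinity] at hx
  obtain ⟨⟨x, y⟩, hxy, rfl⟩ := hx
  rw [smul_affinePoint hM, affinePoint_injective.eq_iff, Prod.mk.injEq] at hMx
  obtain ⟨hx, hy⟩ := hMx
  have hyq : c ^ q * x ^ q + a * y ^ q = y ^ q := by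
    rw [← pow_pow_of_card_eq_sq hF a, ← mul_pow, ← mul_pow, ← add_pow_of_card_eq_sq hF, hy]
  have hxy' : x * x ^ q - y * y ^ q = 1 := by rw [← pow_succ', ← pow_succ']; exact hxy
  obtain rfl : a = 1 := by
    linear_combination x ^ q * hx - y * hyq - (a - 1) * hxy'
  have hcq : c ^ q = 0 := by linear_combination x * hyq - y ^ q * hx - c ^ q * hxy'
  refine Units.ext ?_
  rw [hM, hcq, eq_zero_of_pow_eq_zero hcq, one_pow, Units.val_one, one_fin_three]

theorem eq_one_of_mul_smul_eq_self (hF : Fintype.card F = q ^ 2) {d z : GL (Fin 3) F} {n : ℕ}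
    (hn : n.Coprime (q + 1)) (hd : d ∈ MlSet q F) (hdn : d ^ n = 1) (hz : z ∈ centralSubgroup q F)
    {x : Projectivization F (Fin 3 → F)} (hx : x ∈ hermitianPts q F \ lineAtInfinity F)
    (hdzx : (d * z) • x = x) : d * z = 1 := by
  have hznx : z ^ n • x = x := by
    have h := (stabilizer (GL (Fin 3) F) x).pow_mem hdzx n
    rwa [(commute_of_mem_MlSet_of_mem_ZSet hd hz).mul_pow, hdn, one_mul] at h
  have hzn : z ^ n = 1 :=
    eq_one_of_mem_ZSet_of_smul_eq_self ((centralSubgroup q F).pow_mem hz n) hx hznx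
  obtain rfl : z = 1 := by
    rw [← pow_one z, ← hn.gcd_eq_one]
    exact pow_gcd_eq_one.2 ⟨hzn, pow_eq_one_of_mem_ZSet hz⟩
  rw [mul_one] at hdzx ⊢
  exact eq_one_of_det_eq_one_of_smul_eq_self hF hd (det_eq_one_of_pow_eq_one hd hn hdn) hx hdzx

theorem numOrbits_affine (hF : Fintype.card F = q ^ 2)
    (hL : ((D ⊔ Z : Subgroup (GL (Fin 3) F)) : Set (GL (Fin 3) F)) ⊆ MlSet q F)
    (hZ : Z ≤ centralSubgroup q F) (hdisj : Disjoint D Z) (hcop : (Nat.card D).Coprime (q + 1)) :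
    (numOrbits (D ⊔ Z) (hermitianPts q F \ lineAtInfinity F) : ℚ) =
      (q + 1) * (q * (q - 1)) / (Nat.card D * Nat.card Z) := by
  have hD : (D : Set (GL (Fin 3) F)) ⊆ MlSet q F := fun d hd => hL (Subgroup.mem_sup_left hd)
  have hcomm := commute_of_subset_MlSet_of_le_centralSubgroup hD hZ
  have hfree : ∀ g : ↥(D ⊔ Z), ∀ x ∈ affinePart hF hL, g • x = x → g = 1 := by
    rintro ⟨g, hg⟩ x hx hgx
    obtain ⟨d, hd, z, hz, rfl⟩ := exists_mul_eq_of_mem_sup hcomm hg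
    have hdn : d ^ Nat.card D = 1 := orderOf_dvd_iff_pow_eq_one.1 (D.orderOf_dvd_natCard hd)
    exact Subtype.ext (eq_one_of_mul_smul_eq_self hF hcop (hD hd) hdn (hZ hz) hx hgx)
  have hcount : numOrbits (D ⊔ Z) (hermitianPts q F \ lineAtInfinity F) *
      (Nat.card D * Nat.card Z) = (q + 1) * (q * (q - 1)) := by
    rw [numOrbits_eq_ncard_image_orbit, ← card_sup_of_commute_of_disjoint hcomm hdisj,
      ← ncard_hermitianPts_diff_lineAtInfinity hF]
    exact ncard_image_orbit_mul_card_of_free (affinePart hF hL) hfree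
  have hcard : (Nat.card D * Nat.card Z : ℚ) ≠ 0 := by
    exact_mod_cast (mul_pos Nat.card_pos Nat.card_pos).ne'
  rw [eq_div_iff hcard, ← Nat.cast_pred (one_lt_of_card_eq_sq hF).le]
  exact_mod_cast hcount

theorem numOrbits_infinite (hF : Fintype.card F = q ^ 2) (hq : Even q) {t : ℕ} (ht : t ∣ q - 1)
    (e : D ≃* DihedralGroup t) (hD : (D : Set (GL (Fin 3) F)) ⊆ MlSet q F)
    (hdet : ∀ d ∈ D, (d : Matrix (Fin 3) (Fin 3) F).det = 1) (hZ : Z ≤ centralSubgroup q F) :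
    (numOrbits (D ⊔ Z) (hermitianPts q F ∩ lineAtInfinity F) : ℚ) =
      (q - 1 + 3 * t) / (2 * t) := by
  obtain ⟨k, hk⟩ := ht
  have := charP_two_of_card_eq_sq hF hq
  have hq1 := one_lt_of_card_eq_sq hF
  have hcomm := commute_of_subset_MlSet_of_le_centralSubgroup hD hZ
  have horbits : numOrbits (D ⊔ Z) (hermitianPts q F ∩ lineAtInfinity F) =
      Nat.card (orbitRel.Quotient D (infinitePart hF hD)) := by
    rw [numOrbits_eq_ncard_image_orbit, ← ncard_image_orbit]
    exact congrArg Set.ncard <| Set.image_congr fun x hx =>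
      orbit_sup_eq_orbit hcomm fun z hz => smul_eq_self_of_mem_ZSet (hZ hz) hx.2
  have hcard : Nat.card (infinitePart hF hD) = t * k + 2 :=
    (Nat.card_coe_set_eq _).trans <|
      (ncard_hermitianPts_inter_lineAtInfinity hF).trans (by omega)
  have hodd : Odd (t * k) := hk ▸ Nat.Even.sub_odd hq1.le hq odd_one
  have hfix : ∀ g : D, g ≠ 1 → Nat.card (fixedBy (infinitePart hF hD) g) ≤ 2 := fun g hg =>
    (natCard_fixedBy_subMulAction _ g).trans_le <|
      ncard_infinite_inter_fixedBy_le_two (hD g.2) (hdet g g.2) (OneMemClass.coe_eq_one.not.2 hg)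
  have hcount := two_mul_card_orbits_of_dihedral e.symm hcard hodd hfix
  have ht0 : (t : ℚ) ≠ 0 := Nat.cast_ne_zero.2 (Nat.odd_mul.1 hodd).1.pos.ne'
  rw [horbits, ← Nat.cast_pred (by omega), hk]
  qify at hcount ⊢
  field_simp
  linear_combination hcount

end Finite

end Hermitian

theorem coprime_two_mul_add_one {q t : ℕ} (hq : Even q) (hq0 : 0 < q) (ht : t ∣ q - 1) :
    (2 * t).Coprime (q + 1) := by
  obtain ⟨k, hk⟩ := ht
  obtain ⟨htodd, -⟩ := Nat.odd_mul.1 (hk ▸ Nat.Even.sub_odd hq0 hq odd_one)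
  refine Nat.Coprime.mul_left (Nat.coprime_two_left.2 hq.add_one) ?_
  rw [show q + 1 = t * k + 2 by omega, Nat.coprime_mul_left_add_right]
  exact Nat.coprime_two_right.2 htodd

theorem stmt8 (h q t w : ℕ) (hh : 1 ≤ h) (hq : q = 2 ^ h)
    (F : Type*) [Field F] [Fintype F] (hF : Fintype.card F = q ^ 2)
    (ht : t ∣ q - 1) (hw : w ∣ q + 1)
    (L : Subgroup (GL (Fin 3) F)) (hLMl : (L : Set (GL (Fin 3) F)) ⊆ MlSet q F)
    (hZcard : Nat.card ((L : Set (GL (Fin 3) F)) ∩ ZSet q F : Set (GL (Fin 3) F)) = w)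
    (D : Subgroup (GL (Fin 3) F))
    (hDiso : Nonempty (↥D ≃* DihedralGroup t))
    (hgen : L = Subgroup.closure
      ((D : Set (GL (Fin 3) F)) ∪ ((L : Set (GL (Fin 3) F)) ∩ ZSet q F)))
    (htriv : (D : Set (GL (Fin 3) F)) ∩ ((L : Set (GL (Fin 3) F)) ∩ ZSet q F) ⊆ {1}) :
    (numOrbits L (hermitianPts q F) : ℚ)
      = ((q : ℚ) - 1 + 3 * (t : ℚ)) / (2 * (t : ℚ))
        + ((q : ℚ) / 2) * (((q : ℚ) - 1) / (t : ℚ)) * (((q : ℚ) + 1) / (w : ℚ)) := by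
  have hqeven : Even q := hq ▸ even_two.pow_of_ne_zero (by omega)
  have hqpos : 0 < q := (one_lt_of_card_eq_sq hF).le
  obtain ⟨e⟩ := hDiso
  have hcardD : Nat.card D = 2 * t := (Nat.card_congr e.toEquiv).trans DihedralGroup.nat_card
  have hcop : (Nat.card D).Coprime (q + 1) := hcardD ▸ coprime_two_mul_add_one hqeven hqpos ht
  obtain ⟨Z, hZ, hcardZ, hdisj, rfl⟩ := exists_le_centralSubgroup_eq_sup hgen htriv
  have hD : (D : Set (GL (Fin 3) F)) ⊆ MlSet q F := fun d hd => hLMl (Subgroup.mem_sup_left hd)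
  have hdet : ∀ d ∈ D, (d : Matrix (Fin 3) (Fin 3) F).det = 1 := fun d hd =>
    det_eq_one_of_pow_eq_one (hD hd) hcop (orderOf_dvd_iff_pow_eq_one.1 (D.orderOf_dvd_natCard hd))
  rw [numOrbits_hermitianPts hF hLMl, Nat.cast_add, numOrbits_infinite hF hqeven ht e hD hdet hZ,
    numOrbits_affine hF hLMl hZ hdisj hcop, hcardD, hcardZ.trans hZcard, Nat.cast_mul]
  ring
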